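/- Let p, q ∈ (0,1) and set r_− = (√(p(1−q)) − √(q(1−p)))² and r_+ = (√(p(1−q)) + √(q(1−p)))². Then ∫_{r_−}^{r_+} √((1 − r_−/x)(r_+/x − 1)) / (2π(1−x)) dx = 1 − max(p,q) if p + q > 1, and ∫_{r_−}^{r_+} √((1 − r_−/x)(r_+/x − 1)) / (2π(1−x)) dx = min(p,q) if p + q ≤ 1. -/

import Mathlib

/-!
Write `a = r₋` and `b = r₊`. On `(a, b)` the integrand is
`(2π)⁻¹ √((x - a)(b - x)) (1 / x + 1 / (1 - x))`. An explicit antiderivative gives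
`∫ √((x - a)(b - x)) / x = π ((a + b) / 2 - √(ab))`, and the reflection `x ↦ 1 - x` turns the
other summand into an integral of the same kind, so the whole integral is
`(1 - √(ab) - √((1 - a)(1 - b))) / 2`. Here `ab = (p - q)²`, and since
`1 - r₊(p, q) = r₋(1 - p, q)` and `1 - r₋(p, q) = r₊(1 - p, q)`, also
`(1 - a)(1 - b) = (1 - p - q)²`. The dichotomy in the theorem is the sign of `1 - p - q`.
-/

noncomputable section

def rMinus (p q : ℝ) : ℝ := (Real.sqrt (p * (1 - q)) - Real.sqrt (q * (1 - p))) ^ 2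
def rPlus (p q : ℝ) : ℝ := (Real.sqrt (p * (1 - q)) + Real.sqrt (q * (1 - p))) ^ 2

open Set Real

/-- The antiderivative of `1 / √((x - a) * (b - x))` on `(a, b)` that is odd about the midpoint;
up to an additive constant, `π` times the distribution function of the arcsine law on `[a, b]`. -/
def arcsinePrimitive (a b x : ℝ) : ℝ := arcsin ((2 * x - a - b) / (b - a))

@[fun_prop]
lemma continuous_arcsinePrimitive (a b : ℝ) : Continuous (arcsinePrimitive a b) := by
  unfold arcsinePrimitive
  fun_prop

lemma arcsinePrimitive_left {a b : ℝ} (hab : a < b) : arcsinePrimitive a b a = -(π / 2) := by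
  have hba : b - a ≠ 0 := (sub_pos.2 hab).ne'
  have harg : (2 * a - a - b) / (b - a) = -1 := by rw [div_eq_iff hba]; ring
  rw [arcsinePrimitive, harg, arcsin_neg_one]

lemma arcsinePrimitive_right {a b : ℝ} (hab : a < b) : arcsinePrimitive a b b = π / 2 := by
  have hba : b - a ≠ 0 := (sub_pos.2 hab).ne'
  have harg : (2 * b - a - b) / (b - a) = 1 := by rw [div_eq_iff hba]; ring
  rw [arcsinePrimitive, harg, arcsin_one]

lemma hasDerivAt_arcsinePrimitive {a b x : ℝ} (hx : x ∈ Ioo a b) :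
    HasDerivAt (arcsinePrimitive a b) (1 / √((x - a) * (b - x))) x := by
  have hxa : 0 < x - a := sub_pos.2 hx.1
  have hbx : 0 < b - x := sub_pos.2 hx.2
  have hba : 0 < b - a := by linarith
  have hlinear : HasDerivAt (fun y => (2 * y - a - b) / (b - a)) (2 / (b - a)) x := by
    simpa using ((((hasDerivAt_id x).const_mul 2).sub_const a).sub_const b).div_const (b - a)
  have hgt : -1 < (2 * x - a - b) / (b - a) := by rw [lt_div_iff₀ hba]; linarith
  have hlt : (2 * x - a - b) / (b - a) < 1 := by rw [div_lt_iff₀ hba]; linarith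
  have hsqrt : √(1 - ((2 * x - a - b) / (b - a)) ^ 2) = 2 * √((x - a) * (b - x)) / (b - a) := by
    have hsq : 1 - ((2 * x - a - b) / (b - a)) ^ 2
        = 2 ^ 2 * ((x - a) * (b - x)) / (b - a) ^ 2 := by
      field_simp
      ring
    rw [hsq, sqrt_div' _ (sq_nonneg _), sqrt_sq hba.le, sqrt_mul (sq_nonneg _), sqrt_sq two_pos.le]
  refine ((hasDerivAt_arcsin hgt.ne' hlt.ne).comp x hlinear).congr_deriv ?_
  rw [hsqrt]
  field_simp

lemma hasDerivAt_arcsinePrimitive_inv {a b x : ℝ} (ha : 0 < a) (hx : x ∈ Ioo a b) :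
    HasDerivAt (fun y => arcsinePrimitive b⁻¹ a⁻¹ y⁻¹)
      (-(√(a * b) / (x * √((x - a) * (b - x))))) x := by
  have hx0 : 0 < x := ha.trans hx.1
  have hb : 0 < b := hx0.trans hx.2
  have hxinv : x⁻¹ ∈ Ioo b⁻¹ a⁻¹ := ⟨inv_strictAnti₀ hx0 hx.2, inv_strictAnti₀ ha hx.1⟩
  have hsqrt : √((x⁻¹ - b⁻¹) * (a⁻¹ - x⁻¹)) = √((x - a) * (b - x)) / (x * √(a * b)) := by
    have hquot : (x⁻¹ - b⁻¹) * (a⁻¹ - x⁻¹) = (x - a) * (b - x) / (x ^ 2 * (a * b)) := by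
      field_simp
    rw [hquot, sqrt_div' _ (by positivity), sqrt_mul (sq_nonneg x), sqrt_sq hx0.le]
  refine ((hasDerivAt_arcsinePrimitive hxinv).comp x (hasDerivAt_inv hx0.ne')).congr_deriv ?_
  rw [hsqrt]
  field_simp

lemma hasDerivAt_sqrt_sub_mul_sub {a b x : ℝ} (hx : x ∈ Ioo a b) :
    HasDerivAt (fun y => √((y - a) * (b - y)))
      ((a + b - 2 * x) / (2 * √((x - a) * (b - x)))) x := by
  have hprod : 0 < (x - a) * (b - x) := mul_pos (sub_pos.2 hx.1) (sub_pos.2 hx.2)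
  have hquad : HasDerivAt (fun y => (y - a) * (b - y)) (a + b - 2 * x) x :=
    (((hasDerivAt_id' x).sub_const a).mul ((hasDerivAt_id' x).const_sub b)).congr_deriv (by ring)
  exact hquad.sqrt hprod.ne'

/-- An antiderivative of `√((x - a) * (b - x)) / x` on `(a, b)`, for `0 ≤ a`. When `a = 0` the last
term is multiplied by `√0`, so the junk value `a⁻¹ = 0` does no harm. -/
def sqrtDivPrimitive (a b x : ℝ) : ℝ :=
  √((x - a) * (b - x)) + (a + b) / 2 * arcsinePrimitive a b x
    + √(a * b) * arcsinePrimitive b⁻¹ a⁻¹ x⁻¹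

lemma hasDerivAt_sqrtDivPrimitive {a b x : ℝ} (ha : 0 ≤ a) (hx : x ∈ Ioo a b) :
    HasDerivAt (sqrtDivPrimitive a b) (√((x - a) * (b - x)) / x) x := by
  have hx0 : 0 < x := ha.trans_lt hx.1
  have hab : 0 ≤ a * b := mul_nonneg ha (hx0.trans hx.2).le
  have hprod : 0 < (x - a) * (b - x) := mul_pos (sub_pos.2 hx.1) (sub_pos.2 hx.2)
  have hsqrt : 0 < √((x - a) * (b - x)) := sqrt_pos.2 hprod
  have hinv : HasDerivAt (fun y => √(a * b) * arcsinePrimitive b⁻¹ a⁻¹ y⁻¹)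
      (-(a * b / (x * √((x - a) * (b - x))))) x := by
    rcases ha.eq_or_lt with rfl | ha
    · simpa using hasDerivAt_const x (0 : ℝ)
    refine ((hasDerivAt_arcsinePrimitive_inv ha hx).const_mul √(a * b)).congr_deriv ?_
    rw [mul_neg, ← mul_div_assoc, mul_self_sqrt hab]
  refine (((hasDerivAt_sqrt_sub_mul_sub hx).add
    ((hasDerivAt_arcsinePrimitive hx).const_mul ((a + b) / 2))).add hinv).congr_deriv ?_
  field_simp
  rw [sq_sqrt hprod.le]
  ring

lemma continuousOn_sqrtDivPrimitive {a : ℝ} (ha : 0 ≤ a) (b : ℝ) :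
    ContinuousOn (sqrtDivPrimitive a b) (Icc a b) := by
  unfold sqrtDivPrimitive
  refine ContinuousOn.add (by fun_prop) ?_
  rcases ha.eq_or_lt with rfl | ha
  · simpa using continuousOn_const
  have hinv : ContinuousOn (fun x : ℝ => x⁻¹) (Icc a b) :=
    continuousOn_inv₀.mono fun x hx => (ha.trans_le hx.1).ne'
  fun_prop

lemma sqrtDivPrimitive_right_sub_left {a b : ℝ} (ha : 0 ≤ a) (hab : a ≤ b) :
    sqrtDivPrimitive a b b - sqrtDivPrimitive a b a = π * ((a + b) / 2 - √(a * b)) := by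
  rcases hab.eq_or_lt with rfl | hab
  · rw [sub_self, sqrt_mul_self ha]
    ring
  have hinv : √(a * b) * (arcsinePrimitive b⁻¹ a⁻¹ b⁻¹ - arcsinePrimitive b⁻¹ a⁻¹ a⁻¹)
      = -(π * √(a * b)) := by
    rcases ha.eq_or_lt with rfl | ha
    · simp
    have hlt : b⁻¹ < a⁻¹ := inv_strictAnti₀ ha hab
    rw [arcsinePrimitive_left hlt, arcsinePrimitive_right hlt]
    ring
  simp only [sqrtDivPrimitive, arcsinePrimitive_left hab, arcsinePrimitive_right hab, sub_self,
    mul_zero, zero_mul, sqrt_zero]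
  linear_combination hinv

lemma intervalIntegrable_sqrt_sub_mul_sub_div {a b : ℝ} (ha : 0 ≤ a) (hab : a ≤ b) :
    IntervalIntegrable (fun x => √((x - a) * (b - x)) / x) MeasureTheory.volume a b :=
  (intervalIntegrable_iff_integrableOn_Ioc_of_le hab).2 <|
    intervalIntegral.integrableOn_deriv_of_nonneg (continuousOn_sqrtDivPrimitive ha b)
      (fun _ hx => hasDerivAt_sqrtDivPrimitive ha hx)
      (fun _ hx => div_nonneg (sqrt_nonneg _) (ha.trans hx.1.le))

lemma integral_sqrt_sub_mul_sub_div {a b : ℝ} (ha : 0 ≤ a) (hab : a ≤ b) :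
    ∫ x in a..b, √((x - a) * (b - x)) / x = π * ((a + b) / 2 - √(a * b)) := by
  rw [intervalIntegral.integral_eq_sub_of_hasDerivAt_of_le hab (continuousOn_sqrtDivPrimitive ha b)
    (fun _ hx => hasDerivAt_sqrtDivPrimitive ha hx)
    (intervalIntegrable_sqrt_sub_mul_sub_div ha hab), sqrtDivPrimitive_right_sub_left ha hab]

lemma sqrt_sub_mul_sub_reflect (a b c x : ℝ) :
    √((c - x - (c - b)) * (c - a - (c - x))) = √((x - a) * (b - x)) := by
  congr 1
  ring

lemma intervalIntegrable_sqrt_sub_mul_sub_div_const_sub {a b c : ℝ} (hab : a ≤ b) (hbc : b ≤ c) :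
    IntervalIntegrable (fun x => √((x - a) * (b - x)) / (c - x)) MeasureTheory.volume a b := by
  have hreflect := (intervalIntegrable_sqrt_sub_mul_sub_div (sub_nonneg.2 hbc)
    (sub_le_sub_left hab c)).comp_sub_left c
  simpa only [sqrt_sub_mul_sub_reflect, sub_sub_cancel] using hreflect.symm

lemma integral_sqrt_sub_mul_sub_div_const_sub {a b c : ℝ} (hab : a ≤ b) (hbc : b ≤ c) :
    ∫ x in a..b, √((x - a) * (b - x)) / (c - x)
      = π * (c - (a + b) / 2 - √((c - a) * (c - b))) := by
  calc ∫ x in a..b, √((x - a) * (b - x)) / (c - x)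
      = ∫ x in a..b, √((c - x - (c - b)) * (c - a - (c - x))) / (c - x) := by
        simp only [sqrt_sub_mul_sub_reflect]
    _ = ∫ y in c - b..c - a, √((y - (c - b)) * (c - a - y)) / y :=
        intervalIntegral.integral_comp_sub_left
          (fun y => √((y - (c - b)) * (c - a - y)) / y) c
    _ = π * ((c - b + (c - a)) / 2 - √((c - b) * (c - a))) :=
        integral_sqrt_sub_mul_sub_div (sub_nonneg.2 hbc) (sub_le_sub_left hab c)
    _ = π * (c - (a + b) / 2 - √((c - a) * (c - b))) := by
        rw [mul_comm (c - b)]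
        ring

lemma sqrt_one_sub_div_mul_div_sub_one {x : ℝ} (hx : 0 < x) (a b : ℝ) :
    √((1 - a / x) * (b / x - 1)) = √((x - a) * (b - x)) / x := by
  have hquot : (1 - a / x) * (b / x - 1) = (x - a) * (b - x) / x ^ 2 := by field_simp
  rw [hquot, sqrt_div' _ (sq_nonneg x), sqrt_sq hx.le]

lemma integral_sqrt_one_sub_div_mul_div_sub_one_div {a b : ℝ} (ha : 0 ≤ a) (hab : a ≤ b)
    (hb : b ≤ 1) :
    ∫ x in a..b, √((1 - a / x) * (b / x - 1)) / (2 * π * (1 - x))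
      = (1 - √(a * b) - √((1 - a) * (1 - b))) / 2 := by
  have hpartialFractions : (Ioo a b).EqOn
      (fun x => √((1 - a / x) * (b / x - 1)) / (2 * π * (1 - x)))
      (fun x => (2 * π)⁻¹ * (√((x - a) * (b - x)) / x + √((x - a) * (b - x)) / (1 - x))) := by
    intro x hx
    have hx0 : 0 < x := ha.trans_lt hx.1
    have hx1 : 1 - x ≠ 0 := (sub_pos.2 (hx.2.trans_le hb)).ne'
    simp only [sqrt_one_sub_div_mul_div_sub_one hx0]
    field_simp
    ring
  rw [intervalIntegral.integral_congr_Ioo_of_le hab hpartialFractions,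
    intervalIntegral.integral_const_mul,
    intervalIntegral.integral_add (intervalIntegrable_sqrt_sub_mul_sub_div ha hab)
      (intervalIntegrable_sqrt_sub_mul_sub_div_const_sub hab hb),
    integral_sqrt_sub_mul_sub_div ha hab, integral_sqrt_sub_mul_sub_div_const_sub hab hb]
  field_simp
  ring

lemma rMinus_nonneg (p q : ℝ) : 0 ≤ rMinus p q := sq_nonneg _

lemma rMinus_le_rPlus (p q : ℝ) : rMinus p q ≤ rPlus p q := by
  have hprod : 0 ≤ √(p * (1 - q)) * √(q * (1 - p)) := by positivity
  unfold rMinus rPlus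
  linarith

lemma rMinus_eq_sub_sqrt {p q : ℝ} (hp : p ∈ Icc (0 : ℝ) 1) (hq : q ∈ Icc (0 : ℝ) 1) :
    rMinus p q = p * (1 - q) + q * (1 - p) - 2 * √(p * (1 - p) * (q * (1 - q))) := by
  have hpq : 0 ≤ p * (1 - q) := mul_nonneg hp.1 (sub_nonneg.2 hq.2)
  have hqp : 0 ≤ q * (1 - p) := mul_nonneg hq.1 (sub_nonneg.2 hp.2)
  rw [rMinus, sub_sq, sq_sqrt hpq, sq_sqrt hqp, mul_assoc, ← sqrt_mul hpq]
  ring_nf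

lemma rPlus_eq_add_sqrt {p q : ℝ} (hp : p ∈ Icc (0 : ℝ) 1) (hq : q ∈ Icc (0 : ℝ) 1) :
    rPlus p q = p * (1 - q) + q * (1 - p) + 2 * √(p * (1 - p) * (q * (1 - q))) := by
  have hpq : 0 ≤ p * (1 - q) := mul_nonneg hp.1 (sub_nonneg.2 hq.2)
  have hqp : 0 ≤ q * (1 - p) := mul_nonneg hq.1 (sub_nonneg.2 hp.2)
  rw [rPlus, add_sq, sq_sqrt hpq, sq_sqrt hqp, mul_assoc, ← sqrt_mul hpq]
  ring_nf

-- With `p = sin² α` and `q = sin² β`, acute angles, `r₊ = sin² (α + β)` and `r₋ = sin² (α - β)`,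
-- and `p ↦ 1 - p` is `α ↦ π / 2 - α`: this lemma and the next are `1 - sin² = cos²`.
lemma one_sub_rPlus {p q : ℝ} (hp : p ∈ Icc (0 : ℝ) 1) (hq : q ∈ Icc (0 : ℝ) 1) :
    1 - rPlus p q = rMinus (1 - p) q := by
  rw [rPlus_eq_add_sqrt hp hq, rMinus_eq_sub_sqrt (Icc.one_sub_mem hp) hq, sub_sub_cancel,
    mul_comm (1 - p) p]
  ring

lemma one_sub_rMinus {p q : ℝ} (hp : p ∈ Icc (0 : ℝ) 1) (hq : q ∈ Icc (0 : ℝ) 1) :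
    1 - rMinus p q = rPlus (1 - p) q := by
  rw [rMinus_eq_sub_sqrt hp hq, rPlus_eq_add_sqrt (Icc.one_sub_mem hp) hq, sub_sub_cancel,
    mul_comm (1 - p) p]
  ring

lemma rPlus_le_one {p q : ℝ} (hp : p ∈ Icc (0 : ℝ) 1) (hq : q ∈ Icc (0 : ℝ) 1) :
    rPlus p q ≤ 1 :=
  sub_nonneg.1 <| one_sub_rPlus hp hq ▸ rMinus_nonneg (1 - p) q

lemma sqrt_rMinus_mul_rPlus {p q : ℝ} (hp : p ∈ Icc (0 : ℝ) 1) (hq : q ∈ Icc (0 : ℝ) 1) :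
    √(rMinus p q * rPlus p q) = |p - q| := by
  have hpq : 0 ≤ p * (1 - q) := mul_nonneg hp.1 (sub_nonneg.2 hq.2)
  have hqp : 0 ≤ q * (1 - p) := mul_nonneg hq.1 (sub_nonneg.2 hp.2)
  have hmul : rMinus p q * rPlus p q = (p - q) ^ 2 := by
    calc rMinus p q * rPlus p q
        = (√(p * (1 - q)) ^ 2 - √(q * (1 - p)) ^ 2) ^ 2 := by unfold rMinus rPlus; ring
      _ = (p - q) ^ 2 := by rw [sq_sqrt hpq, sq_sqrt hqp]; ring
  rw [hmul, sqrt_sq_eq_abs]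

lemma integral_rMinus_rPlus {p q : ℝ} (hp : p ∈ Icc (0 : ℝ) 1) (hq : q ∈ Icc (0 : ℝ) 1) :
    ∫ x in rMinus p q..rPlus p q,
      √((1 - rMinus p q / x) * (rPlus p q / x - 1)) / (2 * π * (1 - x))
      = (1 - |p - q| - |1 - p - q|) / 2 := by
  rw [integral_sqrt_one_sub_div_mul_div_sub_one_div (rMinus_nonneg p q) (rMinus_le_rPlus p q)
      (rPlus_le_one hp hq), sqrt_rMinus_mul_rPlus hp hq, one_sub_rMinus hp hq, one_sub_rPlus hp hq,
    mul_comm (rPlus _ _), sqrt_rMinus_mul_rPlus (Icc.one_sub_mem hp) hq]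

theorem stmt17 (p q : ℝ) (hp : p ∈ Set.Ioo (0 : ℝ) 1) (hq : q ∈ Set.Ioo (0 : ℝ) 1) :
    (1 < p + q →
      (∫ x in rMinus p q..rPlus p q,
        Real.sqrt ((1 - rMinus p q / x) * (rPlus p q / x - 1)) / (2 * Real.pi * (1 - x)))
        = 1 - max p q) ∧
    (p + q ≤ 1 →
      (∫ x in rMinus p q..rPlus p q,
        Real.sqrt ((1 - rMinus p q / x) * (rPlus p q / x - 1)) / (2 * Real.pi * (1 - x)))
        = min p q) := by
  have hdiff : max p q - min p q = |p - q| := max_sub_min_eq_abs' p q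
  have hsum : min p q + max p q = p + q := min_add_max p q
  rw [integral_rMinus_rPlus (Ioo_subset_Icc_self hp) (Ioo_subset_Icc_self hq)]
  constructor
  · intro hpq
    rw [abs_of_neg (by linarith : 1 - p - q < 0)]
    linarith
  · intro hpq
    rw [abs_of_nonneg (by linarith : 0 ≤ 1 - p - q)]
    linarith

end
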